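/- arXiv:2509.00794 — 3 statements merged into one kernel-verified Lean document; each statement's English description precedes it below -/
import Mathlib

section
/- Pointwise core inequality of the L-scheme (adjugate form): let d ≥ 1, let U, V, A be symmetric d×d real matrices, and let 0 < λm ≤ λM and Λ > 0 be real numbers with λm•I ⪯ U ⪯ A ⪯ V ⪯ λM•I and Λ ≥ λM^(d−1). Set E := V − U and ξ := max(det(U)/λM, λm^(d−1)). Then 0 ≤ (1 − λM^(d−1)/Λ)·trace(E) ≤ trace(E) − (1/Λ)·trace(adjugate(A) * E) ≤ (1 − ξ/Λ)·trace(E). -/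
open Matrix Finset in
lemma aux_adj {n : ℕ} (Q W : Matrix (Fin n) (Fin n) ℝ) (h : Q * W = 1) :
    Q.adjugate = Q.det • W := by
  calc Q.adjugate = Q.adjugate * (Q * W) := by rw [h, Matrix.mul_one]
    _ = Q.det • W := by rw [← Matrix.mul_assoc, Matrix.adjugate_mul]; simp

open Matrix Finset in
lemma aux_spec {n : ℕ} (A : Matrix (Fin n) (Fin n) ℝ) (hA : A.IsHermitian) :
    ∃ (Q : Matrix (Fin n) (Fin n) ℝ) (m : Fin n → ℝ),
      Q * Qᴴ = 1 ∧ Qᴴ * Q = 1 ∧ A = Q * diagonal m * Qᴴ := by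
  refine ⟨hA.eigenvectorUnitary, hA.eigenvalues, ?_, ?_, ?_⟩
  · exact Unitary.coe_mul_star_self hA.eigenvectorUnitary
  · exact Unitary.coe_star_mul_self hA.eigenvectorUnitary
  · have h := hA.spectral_theorem
    rw [Unitary.conjStarAlgAut_apply] at h
    exact h

open Matrix Finset in
lemma aux_lower {n : ℕ} (A Q : Matrix (Fin n) (Fin n) ℝ) (m : Fin n → ℝ) (c : ℝ)
    (h2 : Qᴴ * Q = 1) (h : A = Q * diagonal m * Qᴴ)
    (hc : (A - c • (1 : Matrix (Fin n) (Fin n) ℝ)).PosSemidef) (i : Fin n) : c ≤ m i := by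
  have := hc.conjTranspose_mul_mul_same Q
  have e : Qᴴ * (A - c • (1 : Matrix (Fin n) (Fin n) ℝ)) * Q = diagonal m - c • 1 := by
    rw [h, Matrix.mul_sub, Matrix.sub_mul]
    congr 1
    · calc _ = (Qᴴ * Q) * diagonal m * (Qᴴ * Q) := by simp only [Matrix.mul_assoc]
        _ = _ := by rw [h2]; simp
    · rw [Matrix.mul_smul, Matrix.smul_mul, Matrix.mul_one, h2]
  rw [e] at this
  have := this.diag_nonneg (i := i)
  simpa using this

open Matrix Finset in
lemma aux_upper {n : ℕ} (A Q : Matrix (Fin n) (Fin n) ℝ) (m : Fin n → ℝ) (c : ℝ)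
    (h2 : Qᴴ * Q = 1) (h : A = Q * diagonal m * Qᴴ)
    (hc : (c • (1 : Matrix (Fin n) (Fin n) ℝ) - A).PosSemidef) (i : Fin n) : m i ≤ c := by
  have := aux_lower (-A) Q (-m) (-c) h2 (by
      have e : diagonal (-m) = -diagonal m := (diagonal_neg m).symm
      rw [h, e, Matrix.mul_neg, Matrix.neg_mul])
    (by convert hc using 1; rw [neg_smul]; abel) i
  simpa using this

open Matrix Finset in
lemma aux_det {n : ℕ} (A Q : Matrix (Fin n) (Fin n) ℝ) (m : Fin n → ℝ)
    (h1 : Q * Qᴴ = 1) (h : A = Q * diagonal m * Qᴴ) : A.det = ∏ i, m i := by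
  have : Q.det * Qᴴ.det = 1 := by rw [← det_mul, h1, det_one]
  rw [h, det_mul, det_mul, det_diagonal]
  linear_combination (∏ i, m i) * this

open Matrix Finset in
lemma aux_det_mono {n : ℕ} (U A : Matrix (Fin n) (Fin n) ℝ) (hU : U.PosDef)
    (hA : A.IsHermitian) (h : (A - U).PosSemidef) : U.det ≤ A.det := by
  obtain ⟨Q, m, q1, q2, e⟩ := aux_spec U hU.1
  have hm : ∀ i, 0 < m i := by
    intro i
    have := hU.conjTranspose_mul_mul_same (B := Q) (by
      intro x y hxy
      have := congrArg (fun z => Qᴴ *ᵥ z) hxy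
      simpa only [mulVec_mulVec, q2, one_mulVec] using this)
    have e' : Qᴴ * U * Q = diagonal m := by
      rw [e]
      calc _ = (Qᴴ * Q) * diagonal m * (Qᴴ * Q) := by simp only [Matrix.mul_assoc]
        _ = _ := by rw [q2]; simp
    rw [e'] at this
    simpa using this.diag_pos (i := i)
  set T : Matrix (Fin n) (Fin n) ℝ := Q * diagonal (fun i => (Real.sqrt (m i))⁻¹) with hT
  have hTU : Tᴴ * U * T = 1 := by
    rw [hT, e, conjTranspose_mul, diagonal_conjTranspose]
    calc _ = diagonal (star fun i => (Real.sqrt (m i))⁻¹) * ((Qᴴ * Q) * diagonal m * (Qᴴ * Q)) *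
          diagonal (fun i => (Real.sqrt (m i))⁻¹) := by simp only [Matrix.mul_assoc]
      _ = 1 := by
        rw [q2, Matrix.one_mul, Matrix.mul_one, diagonal_mul_diagonal, diagonal_mul_diagonal,
          ← diagonal_one]
        congr 1
        funext i
        have h0 := Real.sqrt_pos.2 (hm i)
        have h1 := Real.mul_self_sqrt (hm i).le
        simp only [Pi.star_apply, star_trivial]
        field_simp
        nlinarith
  have hP : (Tᴴ * A * T - (1 : ℝ) • (1 : Matrix (Fin n) (Fin n) ℝ)).PosSemidef := by
    have := h.conjTranspose_mul_mul_same T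
    rwa [Matrix.mul_sub, Matrix.sub_mul, hTU, ← one_smul ℝ (1 : Matrix (Fin n) (Fin n) ℝ)] at this
  obtain ⟨R, k, r1, r2, e2⟩ := aux_spec (Tᴴ * A * T) (isHermitian_conjTranspose_mul_mul T hA)
  have hk := aux_lower _ R k 1 r2 e2 hP
  have hd : 1 ≤ (Tᴴ * A * T).det := by
    rw [aux_det _ R k r1 e2]
    calc (1 : ℝ) = ∏ i : Fin n, 1 := by simp
      _ ≤ _ := Finset.prod_le_prod (by simp) (fun i _ => hk i)
  have hd2 : (Tᴴ * U * T).det = 1 := by rw [hTU, det_one]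
  rw [det_mul, det_mul] at hd hd2
  have hUp := hU.det_pos
  have : 0 < Tᴴ.det * T.det := by
    by_contra hn
    nlinarith
  have : Tᴴ.det * T.det * U.det ≤ Tᴴ.det * T.det * A.det := by linarith
  exact le_of_mul_le_mul_left this ‹_›

open Matrix Finset in
/-- The quadratic form of the cofactor matrix in the eigenbasis. -/
lemma aux_trace {n : ℕ} (A Q E : Matrix (Fin n) (Fin n) ℝ) (m : Fin n → ℝ)
    (h1 : Q * Qᴴ = 1) (h2 : Qᴴ * Q = 1) (h : A = Q * diagonal m * Qᴴ) :
    (A.adjugate * E).trace = ∑ i, (∏ j ∈ univ.erase i, m j) * (Qᴴ * E * Q) i i := by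
  have hd : Q.det * Qᴴ.det = 1 := by rw [← det_mul, h1, det_one]
  have e : A.adjugate = Q * diagonal (fun i => ∏ j ∈ univ.erase i, m j) * Qᴴ := by
    rw [h, adjugate_mul_distrib, adjugate_mul_distrib, aux_adj Q _ h1, aux_adj Qᴴ _ h2,
      adjugate_diagonal]
    simp only [Matrix.smul_mul, Matrix.mul_smul, smul_smul, hd, one_smul, Matrix.mul_assoc]
  rw [e]
  calc _ = (diagonal (fun i => ∏ j ∈ univ.erase i, m j) * (Qᴴ * E * Q)).trace := by
        simp only [Matrix.mul_assoc]
        rw [trace_mul_comm]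
        simp only [Matrix.mul_assoc]
    _ = _ := by simp [trace, diagonal_mul]

/-- Pointwise core inequality of the L-scheme (adjugate form). -/
theorem lscheme_core_inequality_adjugate (d : ℕ) (hd : 1 ≤ d)
    (U V A : Matrix (Fin d) (Fin d) ℝ)
    (hU : U.IsHermitian) (hV : V.IsHermitian) (hA : A.IsHermitian)
    (lm lM L : ℝ) (hlm : 0 < lm) (hlmM : lm ≤ lM) (hL : 0 < L)
    (hUlm : (U - lm • (1 : Matrix (Fin d) (Fin d) ℝ)).PosSemidef)
    (hAU : (A - U).PosSemidef) (hVA : (V - A).PosSemidef)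
    (hVlM : (lM • (1 : Matrix (Fin d) (Fin d) ℝ) - V).PosSemidef)
    (hLge : lM ^ (d - 1) ≤ L) :
    0 ≤ (1 - lM ^ (d - 1) / L) * (V - U).trace ∧
    (1 - lM ^ (d - 1) / L) * (V - U).trace ≤
      (V - U).trace - (1 / L) * (A.adjugate * (V - U)).trace ∧
    (V - U).trace - (1 / L) * (A.adjugate * (V - U)).trace ≤
      (1 - max (U.det / lM) (lm ^ (d - 1)) / L) * (V - U).trace := by
  have hlM : 0 < lM := hlm.trans_le hlmM
  have hE : (V - U).PosSemidef := by
    convert hVA.add hAU using 1; abel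
  have hUpd : U.PosDef := by
    have h1 : (lm • (1 : Matrix (Fin d) (Fin d) ℝ)).PosDef := Matrix.PosDef.one.smul hlm
    convert h1.add_posSemidef hUlm using 1; abel
  have hdet := aux_det_mono U A hUpd hA hAU
  obtain ⟨Q, m, q1, q2, e⟩ := aux_spec A hA
  have hlo := aux_lower A Q m lm q2 e (by convert hAU.add hUlm using 1; abel)
  have hup := aux_upper A Q m lM q2 e (by convert hVlM.add hVA using 1; abel)
  have hF := hE.conjTranspose_mul_mul_same Q
  have htr := aux_trace A Q (V - U) m q1 q2 e
  have htE : (V - U).trace = ∑ i, (Q.conjTranspose * (V - U) * Q) i i := by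
    have : (Q.conjTranspose * (V - U) * Q).trace = (V - U).trace := by
      rw [Matrix.trace_mul_comm, ← Matrix.mul_assoc, q1, Matrix.one_mul]
    rw [← this]; rfl
  have hcard : ∀ i : Fin d, (Finset.univ.erase i).card = d - 1 := by
    intro i; simp
  have hAdet := aux_det A Q m q1 e
  have hub : (A.adjugate * (V - U)).trace ≤ lM ^ (d - 1) * (V - U).trace := by
    rw [htr, htE, Finset.mul_sum]
    refine Finset.sum_le_sum fun i _ => mul_le_mul_of_nonneg_right ?_ hF.diag_nonneg
    rw [← hcard i, ← Finset.prod_const]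
    exact Finset.prod_le_prod (fun j _ => hlm.le.trans (hlo j)) (fun j _ => hup j)
  have hlb : max (U.det / lM) (lm ^ (d - 1)) * (V - U).trace ≤ (A.adjugate * (V - U)).trace := by
    rw [htr, htE, Finset.mul_sum]
    refine Finset.sum_le_sum fun i _ => mul_le_mul_of_nonneg_right (max_le ?_ ?_) hF.diag_nonneg
    · rw [div_le_iff₀ hlM]
      have h1 : (∏ j ∈ Finset.univ.erase i, m j) * m i = A.det := by
        rw [hAdet, Finset.prod_erase_mul _ _ (Finset.mem_univ i)]
      have h2 : 0 ≤ ∏ j ∈ Finset.univ.erase i, m j :=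
        Finset.prod_nonneg fun j _ => hlm.le.trans (hlo j)
      have h3 := mul_le_mul_of_nonneg_left (hup i) h2
      linarith
    · rw [← hcard i, ← Finset.prod_const]
      exact Finset.prod_le_prod (fun j _ => hlm.le) (fun j _ => hlo j)
  have hub' := mul_le_mul_of_nonneg_left hub (one_div_nonneg.2 hL.le)
  have hlb' := mul_le_mul_of_nonneg_left hlb (one_div_nonneg.2 hL.le)
  refine ⟨mul_nonneg (sub_nonneg.2 ((div_le_one hL).2 hLge)) hE.trace_nonneg, ?_, ?_⟩
  · calc _ = (V - U).trace - 1 / L * (lM ^ (d - 1) * (V - U).trace) := by ring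
      _ ≤ _ := by linarith
  · calc _ ≤ (V - U).trace - 1 / L * (max (U.det / lM) (lm ^ (d - 1)) * (V - U).trace) := by
          linarith
      _ = _ := by ring
end

section
/- Pointwise contraction inequality of the L-scheme (determinant form, Lemma 4.2 with μ_f = 0): let d ≥ 1, let U, V be symmetric d×d real matrices, and let 0 < λm ≤ λM and Λ > 0 be real numbers with λm•I ⪯ U ⪯ V ⪯ λM•I and Λ ≥ λM^(d−1). Set ξ := max(det(U)/λM, λm^(d−1)). Then 0 ≤ (1 − λM^(d−1)/Λ)·trace(V − U) ≤ trace(V − U) − (det(V) − det(U))/Λ ≤ (1 − ξ/Λ)·trace(V − U). -/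
open Matrix in
theorem ls_diag_det {d : ℕ} (w u : Fin d → ℝ) (hw : ∀ i, w i ≠ 0) :
    (diagonal w + vecMulVec u u).det
      = ∏ i, w i + ∑ i, (∏ j ∈ Finset.univ.erase i, w j) * (u i * u i) := by
  have h1 : diagonal w + vecMulVec u u
      = diagonal w * (1 + replicateCol Unit (fun i => u i / w i) * replicateRow Unit u) := by
    rw [mul_add, mul_one, ← vecMulVec_eq]
    congr 1
    ext i j
    rw [diagonal_mul, vecMulVec_apply, vecMulVec_apply]
    field_simp [hw i]
  rw [h1, det_mul, det_one_add_replicateCol_mul_replicateRow, det_diagonal, mul_add, mul_one]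
  congr 1
  rw [dotProduct, Finset.mul_sum]
  refine Finset.sum_congr rfl fun i _ => ?_
  rw [← Finset.mul_prod_erase Finset.univ w (Finset.mem_univ i)]
  field_simp [hw i]

open Matrix in
theorem ls_rank_one {d : ℕ} (W : Matrix (Fin d) (Fin d) ℝ) (v : Fin d → ℝ) (lm lM : ℝ)
    (hlm : 0 < lm) (hlmM : lm ≤ lM)
    (h1 : (W - lm • (1 : Matrix (Fin d) (Fin d) ℝ)).PosSemidef)
    (h2 : (lM • (1 : Matrix (Fin d) (Fin d) ℝ) - W).PosSemidef) :
    0 < W.det ∧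
    (W + vecMulVec v v).det - W.det ≤ lM ^ (d - 1) * (v ⬝ᵥ v) ∧
    lm ^ (d - 1) * (v ⬝ᵥ v) ≤ (W + vecMulVec v v).det - W.det ∧
    W.det / lM * (v ⬝ᵥ v) ≤ (W + vecMulVec v v).det - W.det := by
  have hlM : 0 < lM := hlm.trans_le hlmM
  have hW : W.IsHermitian := by
    have := h1.1.add (isHermitian_one.smul (k := lm) (by simp [IsSelfAdjoint]) :
      (lm • (1 : Matrix (Fin d) (Fin d) ℝ)).IsHermitian)
    simpa using this
  obtain ⟨P, w, hP, hP', hWP⟩ : ∃ (P : Matrix (Fin d) (Fin d) ℝ) (w : Fin d → ℝ),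
      Pᵀ * P = 1 ∧ P * Pᵀ = 1 ∧ W = P * diagonal w * Pᵀ := by
    refine ⟨hW.eigenvectorUnitary, hW.eigenvalues, ?_, ?_, ?_⟩
    · have := Unitary.coe_star_mul_self hW.eigenvectorUnitary
      simpa [star_eq_conjTranspose] using this
    · have := Unitary.coe_mul_star_self hW.eigenvectorUnitary
      simpa [star_eq_conjTranspose] using this
    · have := hW.spectral_theorem
      rw [Unitary.conjStarAlgAut_apply] at this
      simpa [star_eq_conjTranspose, Function.comp_def] using this
  have hconj : Pᵀ * W * P = diagonal w := by
    rw [hWP]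
    calc Pᵀ * (P * diagonal w * Pᵀ) * P = (Pᵀ * P) * diagonal w * (Pᵀ * P) := by
          simp only [Matrix.mul_assoc]
      _ = _ := by rw [hP]; simp
  have hw1 : ∀ i, lm ≤ w i := by
    intro i
    have h := h1.conjTranspose_mul_mul_same P
    rw [conjTranspose_eq_transpose_of_trivial, mul_sub, sub_mul, hconj] at h
    have h' := h.diag_nonneg (i := i)
    simpa [hP] using h'
  have hw2 : ∀ i, w i ≤ lM := by
    intro i
    have h := h2.conjTranspose_mul_mul_same P
    rw [conjTranspose_eq_transpose_of_trivial, mul_sub, sub_mul, hconj] at h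
    have h' := h.diag_nonneg (i := i)
    simpa [hP] using h'
  have hw0 : ∀ i, 0 < w i := fun i => hlm.trans_le (hw1 i)
  have hdd : ∀ X : Matrix (Fin d) (Fin d) ℝ, (Pᵀ * X * P).det = X.det := by
    intro X
    rw [det_mul, det_mul, mul_right_comm, ← det_mul, hP, det_one, one_mul]
  have hdW : W.det = ∏ i, w i := by rw [← hdd, hconj, det_diagonal]
  have hdWv : (W + vecMulVec v v).det
      = ∏ i, w i + ∑ i, (∏ j ∈ Finset.univ.erase i, w j) * ((v ᵥ* P) i * (v ᵥ* P) i) := by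
    rw [← ls_diag_det w _ (fun i => (hw0 i).ne'), ← hdd, mul_add, add_mul, hconj,
      mul_vecMulVec, vecMulVec_mul, mulVec_transpose]
  have hvv : v ⬝ᵥ v = ∑ i, ((v ᵥ* P) i * (v ᵥ* P) i) := by
    change v ⬝ᵥ v = (v ᵥ* P) ⬝ᵥ (v ᵥ* P)
    rw [← dotProduct_mulVec]
    rw [← mulVec_transpose P v, mulVec_mulVec, hP', one_mulVec]
  have hcard : ∀ i : Fin d, (Finset.univ.erase i).card = d - 1 := by
    intro i; simp
  rw [hdWv, hdW, hvv, add_sub_cancel_left, Finset.mul_sum, Finset.mul_sum, Finset.mul_sum]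
  refine ⟨Finset.prod_pos fun i _ => hw0 i, ?_, ?_, ?_⟩ <;>
    refine Finset.sum_le_sum fun i _ => mul_le_mul_of_nonneg_right ?_ (mul_self_nonneg _)
  · rw [← hcard i, ← Finset.prod_const]
    exact Finset.prod_le_prod (fun j _ => (hw0 j).le) (fun j _ => hw2 j)
  · rw [← hcard i, ← Finset.prod_const]
    exact Finset.prod_le_prod (fun j _ => hlm.le) (fun j _ => hw1 j)
  · rw [div_le_iff₀ hlM, ← Finset.mul_prod_erase Finset.univ w (Finset.mem_univ i), mul_comm]
    exact mul_le_mul_of_nonneg_left (hw2 i) (Finset.prod_nonneg fun j _ => (hw0 j).le)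

open Matrix in
theorem ls_vv_psd {d : ℕ} (v : Fin d → ℝ) : (vecMulVec v v).PosSemidef := by
  simpa using posSemidef_vecMulVec_self_star v

open Matrix in
theorem ls_sum {d : ℕ} (U : Matrix (Fin d) (Fin d) ℝ) (lm lM : ℝ)
    (hlm : 0 < lm) (hlmM : lm ≤ lM)
    (h1 : (U - lm • (1 : Matrix (Fin d) (Fin d) ℝ)).PosSemidef)
    (B : Fin d → Fin d → ℝ) (s : Finset (Fin d))
    (h2 : (lM • (1 : Matrix (Fin d) (Fin d) ℝ)
      - (U + ∑ k ∈ s, vecMulVec (B k) (B k))).PosSemidef) :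
    (U + ∑ k ∈ s, vecMulVec (B k) (B k)).det - U.det
      ≤ lM ^ (d - 1) * (∑ k ∈ s, vecMulVec (B k) (B k)).trace ∧
    lm ^ (d - 1) * (∑ k ∈ s, vecMulVec (B k) (B k)).trace
      ≤ (U + ∑ k ∈ s, vecMulVec (B k) (B k)).det - U.det ∧
    U.det / lM * (∑ k ∈ s, vecMulVec (B k) (B k)).trace
      ≤ (U + ∑ k ∈ s, vecMulVec (B k) (B k)).det - U.det := by
  have hlM : 0 < lM := hlm.trans_le hlmM
  induction s using Finset.induction_on with
  | empty => simp
  | insert a s ha ih =>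
    have hS : (∑ k ∈ s, vecMulVec (B k) (B k)).PosSemidef :=
      posSemidef_sum s fun k _ => ls_vv_psd (B k)
    rw [Finset.sum_insert ha] at h2 ⊢
    have h2' : (lM • (1 : Matrix (Fin d) (Fin d) ℝ)
      - (U + ∑ k ∈ s, vecMulVec (B k) (B k))).PosSemidef := by
      have := h2.add (ls_vv_psd (B a))
      convert this using 1
      abel
    have h1' : (U + ∑ k ∈ s, vecMulVec (B k) (B k)
        - lm • (1 : Matrix (Fin d) (Fin d) ℝ)).PosSemidef := by
      have := h1.add hS
      convert this using 1
      abel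
    have h20 : (lM • (1 : Matrix (Fin d) (Fin d) ℝ) - U).PosSemidef := by
      have := h2'.add hS
      convert this using 1
      abel
    obtain ⟨i1, i2, i3⟩ := ih h2'
    obtain ⟨r0, r1, r2, r3⟩ := ls_rank_one _ (B a) lm lM hlm hlmM h1' h2'
    have hU0 := (ls_rank_one U 0 lm lM hlm hlmM h1 h20).1
    have hvv : 0 ≤ B a ⬝ᵥ B a := by
      rw [← trace_vecMulVec]; exact (ls_vv_psd (B a)).trace_nonneg
    have hmono : U.det ≤ (U + ∑ k ∈ s, vecMulVec (B k) (B k)).det := by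
      have : 0 ≤ U.det / lM * (∑ k ∈ s, vecMulVec (B k) (B k)).trace :=
        mul_nonneg (by positivity) hS.trace_nonneg
      linarith
    have hm2 : U.det / lM * (B a ⬝ᵥ B a)
        ≤ (U + ∑ k ∈ s, vecMulVec (B k) (B k)).det / lM * (B a ⬝ᵥ B a) := by gcongr
    rw [trace_add, trace_vecMulVec, add_comm (vecMulVec (B a) (B a)), ← add_assoc]
    refine ⟨?_, ?_, ?_⟩ <;> rw [mul_add] <;> linarith


/-- Pointwise contraction inequality of the L-scheme (determinant form). -/
theorem lscheme_core_inequality_det (d : ℕ) (hd : 1 ≤ d)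
    (U V : Matrix (Fin d) (Fin d) ℝ)
    (hU : U.IsHermitian) (hV : V.IsHermitian)
    (lm lM L : ℝ) (hlm : 0 < lm) (hlmM : lm ≤ lM) (hL : 0 < L)
    (hUlm : (U - lm • (1 : Matrix (Fin d) (Fin d) ℝ)).PosSemidef)
    (hVU : (V - U).PosSemidef)
    (hVlM : (lM • (1 : Matrix (Fin d) (Fin d) ℝ) - V).PosSemidef)
    (hLge : lM ^ (d - 1) ≤ L) :
    0 ≤ (1 - lM ^ (d - 1) / L) * (V - U).trace ∧
    (1 - lM ^ (d - 1) / L) * (V - U).trace ≤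
      (V - U).trace - (V.det - U.det) / L ∧
    (V - U).trace - (V.det - U.det) / L ≤
      (1 - max (U.det / lM) (lm ^ (d - 1)) / L) * (V - U).trace := by
  obtain ⟨B, hB⟩ : ∃ B : Matrix (Fin d) (Fin d) ℝ, V - U = B.transpose * B := by
    open scoped MatrixOrder in
    obtain ⟨B, hB⟩ := CStarAlgebra.nonneg_iff_eq_star_mul_self.mp hVU.nonneg
    exact ⟨B, by simpa [Matrix.star_eq_conjTranspose] using hB⟩
  have hB2 : V - U = ∑ k ∈ (Finset.univ : Finset (Fin d)), Matrix.vecMulVec (B k) (B k) := by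
    rw [hB]
    ext i j
    simp [Matrix.mul_apply, Matrix.sum_apply, Matrix.vecMulVec_apply]
  have hVe : U + ∑ k ∈ (Finset.univ : Finset (Fin d)), Matrix.vecMulVec (B k) (B k) = V := by
    rw [← hB2]; abel
  obtain ⟨a1, a2, a3⟩ := ls_sum U lm lM hlm hlmM hUlm B Finset.univ (by rw [hVe]; exact hVlM)
  rw [hVe, ← hB2] at a1 a2 a3
  have ht := hVU.trace_nonneg
  have hmax : max (U.det / lM) (lm ^ (d - 1)) * (V - U).trace ≤ V.det - U.det := by
    rcases max_choice (U.det / lM) (lm ^ (d - 1)) with h | h <;> rw [h] <;> assumption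
  refine ⟨mul_nonneg ?_ ht, ?_, ?_⟩
  · rw [sub_nonneg, div_le_one hL]; exact hLge
  · have := div_le_div_of_nonneg_right a1 hL.le
    rw [sub_mul, one_mul, div_mul_eq_mul_div]; linarith
  · have := div_le_div_of_nonneg_right hmax hL.le
    rw [sub_mul, one_mul, div_mul_eq_mul_div]; linarith
end

section
/- Two-sided Loewner bounds for the cofactor matrix: let d ≥ 1, A a symmetric d×d real matrix, and 0 < λm ≤ λM with λm•I ⪯ A ⪯ λM•I. Then max(λm^(d−1), det(A)/λM)•I ⪯ adjugate(A) ⪯ λM^(d−1)•I. -/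
lemma adjugate_conj_aux {d : ℕ} (U V D : Matrix (Fin d) (Fin d) ℝ) (h1 : U * V = 1)
    (h2 : V * U = 1) : (U * D * V).adjugate = U * D.adjugate * V := by
  have hdet : U.det * V.det = 1 := by rw [← Matrix.det_mul, h1, Matrix.det_one]
  have hU : U.adjugate = U.det • V := by
    calc U.adjugate = U.adjugate * (U * V) := by rw [h1, mul_one]
      _ = U.det • V := by rw [← mul_assoc, Matrix.adjugate_mul]; simp
  have hV : V.adjugate = V.det • U := by
    calc V.adjugate = V.adjugate * (V * U) := by rw [h2, mul_one]
      _ = V.det • U := by rw [← mul_assoc, Matrix.adjugate_mul]; simp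
  rw [Matrix.adjugate_mul_distrib, Matrix.adjugate_mul_distrib, hU, hV]
  simp only [Matrix.smul_mul, Matrix.mul_smul, smul_smul, hdet, one_smul, mul_assoc]

/-- Two-sided Loewner bounds for the cofactor (adjugate) matrix. -/
theorem adjugate_loewner_bounds (d : ℕ) (hd : 1 ≤ d)
    (A : Matrix (Fin d) (Fin d) ℝ) (hA : A.IsHermitian)
    (lm lM : ℝ) (hlm : 0 < lm) (hlmM : lm ≤ lM)
    (hAlm : (A - lm • (1 : Matrix (Fin d) (Fin d) ℝ)).PosSemidef)
    (hAlM : (lM • (1 : Matrix (Fin d) (Fin d) ℝ) - A).PosSemidef) :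
    (A.adjugate - max (lm ^ (d - 1)) (A.det / lM) • (1 : Matrix (Fin d) (Fin d) ℝ)).PosSemidef ∧
    (lM ^ (d - 1) • (1 : Matrix (Fin d) (Fin d) ℝ) - A.adjugate).PosSemidef := by
  obtain ⟨U, v, h1, h2, hAe⟩ : ∃ (U : Matrix (Fin d) (Fin d) ℝ) (v : Fin d → ℝ),
      U * star U = 1 ∧ star U * U = 1 ∧ A = U * Matrix.diagonal v * star U := by
    refine ⟨hA.eigenvectorUnitary, hA.eigenvalues, ?_, ?_, ?_⟩
    · exact Unitary.coe_mul_star_self _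
    · exact Unitary.coe_star_mul_self _
    · conv_lhs => rw [hA.spectral_theorem, Unitary.conjStarAlgAut_apply]
      rfl
  have hU : IsUnit U := ⟨⟨U, star U, h1, h2⟩, rfl⟩
  have hc : ∀ c : ℝ, c • (1 : Matrix (Fin d) (Fin d) ℝ)
      = U * Matrix.diagonal (fun _ => c) * star U := by
    intro c
    rw [← Matrix.smul_one_eq_diagonal]
    simp [h1]
  have hsub : ∀ f g : Fin d → ℝ, (U * Matrix.diagonal f * star U -
      U * Matrix.diagonal g * star U).PosSemidef ↔ ∀ i, g i ≤ f i := by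
    intro f g
    rw [← sub_mul, ← mul_sub, Matrix.diagonal_sub, Matrix.IsUnit.posSemidef_star_right_conjugate_iff hU,
      Matrix.posSemidef_diagonal_iff]
    simp
  have hdet : A.det = ∏ i, v i := by
    rw [hAe, Matrix.det_mul, Matrix.det_mul, mul_right_comm, ← Matrix.det_mul, h1]
    simp
  have hadj : A.adjugate = U * Matrix.diagonal (fun i => ∏ j ∈ Finset.univ.erase i, v j) * star U := by
    rw [hAe, adjugate_conj_aux _ _ _ h1 h2, Matrix.adjugate_diagonal]
  rw [hc, hAe, hsub] at hAlm hAlM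
  have hcard : ∀ i : Fin d, (Finset.univ.erase i).card = d - 1 := by
    intro i; simp
  rw [hadj, hc, hc, hsub, hsub, hdet]
  have hM : 0 < lM := hlm.trans_le hlmM
  refine ⟨fun i => max_le ?_ ?_, fun i => ?_⟩
  · rw [← hcard i, ← Finset.prod_const]
    exact Finset.prod_le_prod (fun _ _ => hlm.le) (fun j _ => hAlm j)
  · rw [div_le_iff₀ hM, ← Finset.prod_erase_mul _ _ (Finset.mem_univ i)]
    exact mul_le_mul_of_nonneg_left (hAlM i)
      (Finset.prod_nonneg fun j _ => hlm.le.trans (hAlm j))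
  · rw [← hcard i, ← Finset.prod_const]
    exact Finset.prod_le_prod (fun j _ => hlm.le.trans (hAlm j)) (fun j _ => hAlM j)
end
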